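/- Let Q be an n×n real symmetric invertible matrix, let p ≥ 2 be an integer, and let σ be any real number. Then for every vector e ∈ ℝ^n: eᵀ(I − σQ)^p Q⁻¹ (I − σQ)^p e = eᵀQ⁻¹e − σ·eᵀe − σ^{2p−1}·(eᵀQ^{2p−2}e − σ·eᵀQ^{2p−1}e) − Σ_{i=1}^{p−1} c(p,i)·σ^i·eᵀ(I − σQ)^{p−i} Q^{i−1} (I − σQ)^{p−i} e, where c(p,i) = (2p−1)·(2p−i−2)!/(i!·(2p−1−2i)!). -/

import Mathlib

/-!
Everything in sight is a function of `Q`, so after multiplication by `Q` the claim becomes a polynomial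
identity in `x = σ Q`. With `y = 1 - x` and `m = 2p - 1` it is `y` times
`∑_{i ≤ m/2} m/(m-i) C(m-i,i) x^i y^(m-2i) = 1 + (-x)^m`,
the expansion of the power sum `a^m + b^m` in terms of `a + b = y` and `a b = -x`, whose solution
is `a = 1`, `b = -x`.

The coefficient splits as `C(m-i,i) + C(m-i-1,i-1)`, so the left-hand side is `G m + x G (m-2)` for the
Fibonacci-type polynomials `G m = ∑ C(m-i,i) x^i y^(m-2i)` (`fibPoly`). These satisfy
`G (m+2) = y G (m+1) + x G m`, hence `G (m+1) = 1 - x G m` when `x + y = 1`, which gives the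
power sum by induction (`fibPoly_lucas`).
-/

open Matrix

open Finset in
/-- The bivariate Fibonacci polynomial `∑ C(m-i,i) x^i y^(m-2i)`. The terms with `2i > m`, where the
exponent of `y` truncates, have zero coefficient. -/
def fibPoly {R : Type*} [CommRing R] (x y : R) (m : ℕ) : R :=
  ∑ i ∈ range (m + 1), ((m - i).choose i : R) * x ^ i * y ^ (m - 2 * i)

section fibPoly

variable {R : Type*} [CommRing R] (x y : R)

/-- Vanishing coefficients allow the sum to stop anywhere beyond `i = m / 2`. -/
lemma fibPoly_eq_sum_range {m N : ℕ} (h : m < 2 * N) (hN : N ≤ m + 1) :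
    fibPoly x y m = ∑ i ∈ Finset.range N, ((m - i).choose i : R) * x ^ i * y ^ (m - 2 * i) := by
  unfold fibPoly
  symm
  apply Finset.sum_subset (Finset.range_mono hN)
  intro i _ hi
  rw [Finset.mem_range, not_lt] at hi
  rw [Nat.choose_eq_zero_of_lt (by omega)]
  simp

lemma fibPoly_add_two (m : ℕ) :
    fibPoly x y (m + 2) = y * fibPoly x y (m + 1) + x * fibPoly x y m := by
  rw [fibPoly_eq_sum_range x y (m := m + 2) (N := m + 2) (by omega) (by omega)]
  unfold fibPoly
  rw [Finset.sum_range_succ', Finset.sum_range_succ' _ (m + 1), mul_add, Finset.mul_sum,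
    Finset.mul_sum, add_right_comm, ← Finset.sum_add_distrib]
  congr 1
  · apply Finset.sum_congr rfl
    intro i hi
    rw [Finset.mem_range] at hi
    have e1 : m + 2 - (i + 1) = (m - i) + 1 := by omega
    have e2 : m + 1 - (i + 1) = m - i := by omega
    have e3 : m + 2 - 2 * (i + 1) = m - 2 * i := by omega
    rw [e1, e2, e3, Nat.choose_succ_succ]
    by_cases h : 2 * i + 1 ≤ m
    · have e4 : m - 2 * i = (m + 1 - 2 * (i + 1)) + 1 := by omega
      rw [e4]
      push_cast
      ring
    · rw [Nat.choose_eq_zero_of_lt (show m - i < i + 1 by omega)]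
      push_cast
      ring
  · simp
    ring

lemma fibPoly_succ (m : ℕ) : fibPoly x (1 - x) (m + 1) = 1 - x * fibPoly x (1 - x) m := by
  induction m with
  | zero => simp [fibPoly, Finset.sum_range_succ]
  | succ m ih =>
    rw [fibPoly_add_two]
    linear_combination ih

/-- The power sum `1 ^ m + (-x) ^ m`, written with `m + 2` in place of `m`. -/
lemma fibPoly_lucas (m : ℕ) :
    fibPoly x (1 - x) (m + 2) + x * fibPoly x (1 - x) m = 1 + (-x) ^ (m + 2) := by
  induction m with
  | zero =>
    simp [fibPoly, Finset.sum_range_succ]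
    ring
  | succ m ih =>
    rw [fibPoly_succ x (m + 2), fibPoly_succ x m]
    linear_combination (-x) * ih

end fibPoly

/-- The coefficient `c(p,i)` as a sum of two binomials, for `i = j + 1` and `2p - 1 = 2i + k`. -/
lemma coeff_eq_choose (j k : ℕ) :
    (2 * (j + 1) + k) * (j + k).factorial / ((j + 1).factorial * k.factorial) =
      (j + 1 + k).choose (j + 1) + (j + k).choose j := by
  apply Nat.div_eq_of_eq_mul_left (by positivity)
  have h1 := Nat.add_choose_mul_factorial_mul_factorial (j + 1) k
  have h2 := Nat.add_choose_mul_factorial_mul_factorial j k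
  rw [← Nat.choose_symm_add] at h1 h2
  have h3 : (j + 1 + k).factorial = (j + 1 + k) * (j + k).factorial := by
    rw [add_right_comm, Nat.factorial_succ]
  rw [add_mul ((j + 1 + k).choose _), ← mul_assoc, h1, h3, Nat.factorial_succ j, ← h2]
  ring

/-- The scalar identity divided by `1 - x`, with `p = q + 2`. -/
lemma sum_coeff {R : Type*} [CommRing R] (x : R) (q : ℕ) :
    ∑ i ∈ Finset.Icc 1 (q + 1),
      (((2 * (q + 2) - 1) * Nat.factorial (2 * (q + 2) - i - 2) /
        (Nat.factorial i * Nat.factorial (2 * (q + 2) - 1 - 2 * i)) : ℕ) : R) *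
        x ^ i * (1 - x) ^ (2 * (q + 2) - 1 - 2 * i) =
      1 - x ^ (2 * q + 3) - (1 - x) ^ (2 * q + 3) := by
  have h := fibPoly_lucas x (2 * q + 1)
  rw [fibPoly_eq_sum_range x _ (m := 2 * q + 1 + 2) (N := q + 2) (by omega) (by omega),
    fibPoly_eq_sum_range x _ (m := 2 * q + 1) (N := q + 1) (by omega) (by omega),
    Finset.sum_range_succ', Finset.mul_sum, add_right_comm, ← Finset.sum_add_distrib,
    Odd.neg_pow ⟨q + 1, by ring⟩] at h
  rw [← Finset.Ico_add_one_right_eq_Icc, Finset.sum_Ico_eq_sum_range]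
  have hs : ∀ j ∈ Finset.range (q + 1 + 1 - 1),
      (((2 * (q + 2) - 1) * Nat.factorial (2 * (q + 2) - (1 + j) - 2) /
        (Nat.factorial (1 + j) * Nat.factorial (2 * (q + 2) - 1 - 2 * (1 + j))) : ℕ) : R) *
        x ^ (1 + j) * (1 - x) ^ (2 * (q + 2) - 1 - 2 * (1 + j)) =
      ((2 * q + 1 + 2 - (j + 1)).choose (j + 1) : R) * x ^ (j + 1) *
          (1 - x) ^ (2 * q + 1 + 2 - 2 * (j + 1)) +
        x * (((2 * q + 1 - j).choose j : R) * x ^ j * (1 - x) ^ (2 * q + 1 - 2 * j)) := by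
    intro j hj
    rw [Finset.mem_range] at hj
    obtain ⟨k, hk⟩ : ∃ k, 2 * q + 1 = 2 * j + k := ⟨2 * q + 1 - 2 * j, by omega⟩
    have e1 : 2 * (q + 2) - 1 = 2 * (j + 1) + k := by omega
    have e2 : 2 * (q + 2) - (1 + j) - 2 = j + k := by omega
    have e3 : 2 * (j + 1) + k - 2 * (1 + j) = k := by omega
    have e4 : 2 * j + k + 2 - (j + 1) = j + 1 + k := by omega
    have e5 : 2 * j + k + 2 - 2 * (j + 1) = k := by omega
    have e6 : 2 * j + k - j = j + k := by omega
    have e7 : 2 * j + k - 2 * j = k := by omega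
    rw [e2, e1, e3, hk, e4, e5, e6, e7, add_comm 1 j, coeff_eq_choose]
    push_cast
    ring
  rw [Finset.sum_congr rfl hs]
  simp only [Nat.add_sub_cancel, Nat.sub_zero, Nat.choose_zero_right, pow_zero, mul_zero,
    Nat.cast_one, one_mul] at h ⊢
  linear_combination h

open Polynomial in
/-- The claimed identity multiplied by `Q`, as an identity of polynomials in `Q`. -/
lemma poly_identity (p : ℕ) (hp : 2 ≤ p) (σ : ℝ) :
    (1 - σ • X : ℝ[X]) ^ p * (1 - σ • X) ^ p =
      1 - σ • X - σ ^ (2 * p - 1) • (X ^ (2 * p - 1) - σ • X ^ (2 * p)) -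
        ∑ i ∈ Finset.Icc 1 (p - 1),
          ((((2 * p - 1) * Nat.factorial (2 * p - i - 2) /
                (Nat.factorial i * Nat.factorial (2 * p - 1 - 2 * i)) : ℕ) : ℝ) * σ ^ i) •
            ((1 - σ • X) ^ (p - i) * X ^ i * (1 - σ • X) ^ (p - i)) := by
  obtain ⟨q, rfl⟩ : ∃ q, p = q + 2 := ⟨p - 2, by omega⟩
  have h := sum_coeff (σ • X : ℝ[X]) q
  have hs : ∀ i ∈ Finset.Icc 1 (q + 2 - 1),
      ((((2 * (q + 2) - 1) * Nat.factorial (2 * (q + 2) - i - 2) /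
        (Nat.factorial i * Nat.factorial (2 * (q + 2) - 1 - 2 * i)) : ℕ) : ℝ) * σ ^ i) •
          ((1 - σ • X : ℝ[X]) ^ (q + 2 - i) * X ^ i * (1 - σ • X) ^ (q + 2 - i)) =
      (((2 * (q + 2) - 1) * Nat.factorial (2 * (q + 2) - i - 2) /
        (Nat.factorial i * Nat.factorial (2 * (q + 2) - 1 - 2 * i)) : ℕ) : ℝ[X]) *
        (σ • X) ^ i * (1 - σ • X) ^ (2 * (q + 2) - 1 - 2 * i) * (1 - σ • X) := by
    intro i hi
    rw [Finset.mem_Icc] at hi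
    generalize ((2 * (q + 2) - 1) * Nat.factorial (2 * (q + 2) - i - 2) /
        (Nat.factorial i * Nat.factorial (2 * (q + 2) - 1 - 2 * i)) : ℕ) = c
    have e : (1 - σ • X : ℝ[X]) ^ (q + 2 - i) * (1 - σ • X) ^ (q + 2 - i) =
        (1 - σ • X) ^ (2 * (q + 2) - 1 - 2 * i) * (1 - σ • X) := by
      rw [← pow_add, ← pow_succ]
      congr 1
      omega
    rw [mul_right_comm, e, mul_assoc _ _ (1 - σ • X)]
    simp only [smul_eq_C_mul, mul_pow, map_mul, map_pow, map_natCast]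
    ring
  rw [Finset.sum_congr rfl hs, ← Finset.sum_mul, show q + 2 - 1 = q + 1 from rfl, h]
  have e1 : 2 * (q + 2) - 1 = 2 * q + 3 := by omega
  rw [e1]
  simp only [smul_eq_C_mul, map_pow]
  ring

/-- For `Q` real symmetric invertible, `p ≥ 2` and any real `σ`, for every `e`:
`eᵀ(I − σQ)^p Q⁻¹ (I − σQ)^p e = eᵀQ⁻¹e − σ·eᵀe − σ^{2p−1}·(eᵀQ^{2p−2}e − σ·eᵀQ^{2p−1}e)
  − Σ_{i=1}^{p−1} c(p,i)·σ^i·eᵀ(I − σQ)^{p−i} Q^{i−1} (I − σQ)^{p−i} e`,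
where `c(p,i) = (2p−1)·(2p−i−2)!/(i!·(2p−1−2i)!)`. -/
theorem stmt_11 {n : ℕ} {Q : Matrix (Fin n) (Fin n) ℝ} (hsymm : Q.IsSymm)
    (hinv : IsUnit Q.det) (p : ℕ) (hp : 2 ≤ p) (σ : ℝ) (e : Fin n → ℝ) :
    e ⬝ᵥ ((1 - σ • Q) ^ p * Q⁻¹ * (1 - σ • Q) ^ p).mulVec e =
      e ⬝ᵥ Q⁻¹.mulVec e - σ * (e ⬝ᵥ e) -
        σ ^ (2 * p - 1) *
          (e ⬝ᵥ (Q ^ (2 * p - 2)).mulVec e - σ * (e ⬝ᵥ (Q ^ (2 * p - 1)).mulVec e)) -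
        ∑ i ∈ Finset.Icc 1 (p - 1),
          (((2 * p - 1) * Nat.factorial (2 * p - i - 2) /
                (Nat.factorial i * Nat.factorial (2 * p - 1 - 2 * i)) : ℕ) : ℝ) *
            σ ^ i *
            (e ⬝ᵥ ((1 - σ • Q) ^ (p - i) * Q ^ (i - 1) * (1 - σ • Q) ^ (p - i)).mulVec e) := by
  have hQ : Q⁻¹ * Q = 1 := Matrix.nonsing_inv_mul Q hinv
  have key := congrArg (Polynomial.aeval Q) (poly_identity p hp σ)
  simp only [map_sub, map_mul, map_pow, map_sum, map_smul, map_one, Polynomial.aeval_X] at key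
  have hmat : (1 - σ • Q) ^ p * Q⁻¹ * (1 - σ • Q) ^ p =
      Q⁻¹ - σ • (1 : Matrix (Fin n) (Fin n) ℝ) -
        σ ^ (2 * p - 1) • (Q ^ (2 * p - 2) - σ • Q ^ (2 * p - 1)) -
        ∑ i ∈ Finset.Icc 1 (p - 1),
          ((((2 * p - 1) * Nat.factorial (2 * p - i - 2) /
                (Nat.factorial i * Nat.factorial (2 * p - 1 - 2 * i)) : ℕ) : ℝ) * σ ^ i) •
            ((1 - σ • Q) ^ (p - i) * Q ^ (i - 1) * (1 - σ • Q) ^ (p - i)) := by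
    have hc : ∀ k, Commute ((1 - σ • Q) ^ k) Q := fun k =>
      (((Commute.one_left Q).sub_left ((Commute.refl Q).smul_left σ))).pow_left k
    -- Right multiplication by `Q` is injective and turns the claim into `key`.
    have hcancel : ∀ A B : Matrix (Fin n) (Fin n) ℝ, A * Q = B * Q → A = B := fun A B h => by
      have := congrArg (· * Q⁻¹) h
      simpa [mul_assoc, Matrix.mul_nonsing_inv Q hinv] using this
    apply hcancel
    have e1 : Q ^ (2 * p - 2) * Q = Q ^ (2 * p - 1) := by
      rw [← pow_succ]; congr 1; omega
    have e2 : Q ^ (2 * p - 1) * Q = Q ^ (2 * p) := by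
      rw [← pow_succ]; congr 1; omega
    rw [mul_assoc, (hc p).eq, mul_assoc _ Q⁻¹, ← mul_assoc Q⁻¹, hQ, one_mul, key]
    simp only [sub_mul, smul_mul_assoc, Finset.sum_mul, hQ, e1, e2, one_mul]
    congr 1
    apply Finset.sum_congr rfl
    intro i hi
    rw [Finset.mem_Icc] at hi
    have e3 : Q ^ (i - 1) * Q = Q ^ i := by
      rw [← pow_succ]; congr 1; omega
    rw [mul_assoc _ _ Q, (hc (p - i)).eq, ← mul_assoc _ Q, mul_assoc _ _ Q, e3]
  rw [hmat]
  simp only [Matrix.sub_mulVec, Matrix.smul_mulVec, Matrix.sum_mulVec, dotProduct_sub,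
    dotProduct_smul, dotProduct_sum, smul_eq_mul, Matrix.one_mulVec]
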